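/- Let R be a henselian Gorenstein Noetherian local ring and 𝒳 a resolving subcategory of the category of finitely generated R-modules. If every module in 𝒳^⊥ admits a right 𝒳-approximation, then 𝒳 is coherent. -/

import Mathlib

open CategoryTheory IsLocalRing

universe u

noncomputable section

/-- The `i`-th Ext module of two `R`-modules. -/
abbrev ExtMod (R : Type u) [CommRing R] (i : ℕ) (M N : ModuleCat.{u} R) : ModuleCat R :=
  ((Ext R (ModuleCat.{u} R) i).obj (Opposite.op M)).obj N

/-- Vanishing of the `i`-th Ext module: `Ext_R^i(M, N) = 0`. -/
def ExtVanish (R : Type u) [CommRing R] (i : ℕ) (M N : ModuleCat.{u} R) : Prop :=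
  Subsingleton (ExtMod R i M N)

variable (R : Type u) [CommRing R]

/-- `0 → A → B → C → 0` is a short exact sequence. -/
def IsSES {A B C : ModuleCat.{u} R} (f : A →ₗ[R] B) (g : B →ₗ[R] C) : Prop :=
  Function.Injective f ∧ Function.Exact f g ∧ Function.Surjective g

/-- A resolving subcategory of the category of finitely generated `R`-modules. -/
structure IsResolving (𝒳 : Set (ModuleCat.{u} R)) : Prop where
  finite : ∀ M ∈ 𝒳, Module.Finite R M
  isoClosed : ∀ {M N : ModuleCat.{u} R}, M ∈ 𝒳 → (↥M ≃ₗ[R] ↥N) → N ∈ 𝒳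
  freeMem : ∀ M : ModuleCat.{u} R, Module.Finite R M → Module.Free R M → M ∈ 𝒳
  summandClosed : ∀ M N : ModuleCat.{u} R, ModuleCat.of R (↥M × ↥N) ∈ 𝒳 → M ∈ 𝒳
  extClosed : ∀ (A B C : ModuleCat.{u} R) (f : A →ₗ[R] B) (g : B →ₗ[R] C),
    IsSES R f g → A ∈ 𝒳 → C ∈ 𝒳 → B ∈ 𝒳
  kerClosed : ∀ (A B C : ModuleCat.{u} R) (f : A →ₗ[R] B) (g : B →ₗ[R] C),
    IsSES R f g → B ∈ 𝒳 → C ∈ 𝒳 → A ∈ 𝒳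

/-- `f : X → M` is a right `𝒳`-approximation of `M`. -/
def IsRightApprox (𝒳 : Set (ModuleCat.{u} R)) {X M : ModuleCat.{u} R} (f : X →ₗ[R] M) : Prop :=
  X ∈ 𝒳 ∧ ∀ W ∈ 𝒳, ∀ g : ↥W →ₗ[R] ↥M, ∃ h : ↥W →ₗ[R] ↥X, f ∘ₗ h = g

/-- `M` admits a right `𝒳`-approximation. -/
def HasRightApprox (𝒳 : Set (ModuleCat.{u} R)) (M : ModuleCat.{u} R) : Prop :=
  ∃ (X : ModuleCat.{u} R) (f : X →ₗ[R] M), IsRightApprox R 𝒳 f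

/-- `𝒳` is contravariantly infinite: no finitely generated module outside `𝒳` admits
a right `𝒳`-approximation. -/
def ContravariantlyInfinite (𝒳 : Set (ModuleCat.{u} R)) : Prop :=
  ∀ M : ModuleCat.{u} R, Module.Finite R M → M ∉ 𝒳 → ¬ HasRightApprox R 𝒳 M

/-- `𝒳` is contravariantly finite: every finitely generated module admits
a right `𝒳`-approximation. -/
def ContravariantlyFinite (𝒳 : Set (ModuleCat.{u} R)) : Prop :=
  ∀ M : ModuleCat.{u} R, Module.Finite R M → HasRightApprox R 𝒳 M

/-- The restricted functor `Hom_R(-, C)|_𝒳` is finitely presented, i.e. `C ∈ 𝒞(𝒳)`. -/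
def MemCC (𝒳 : Set (ModuleCat.{u} R)) (C : ModuleCat.{u} R) : Prop :=
  ∃ (X₀ X₁ : ModuleCat.{u} R) (g : ↥X₁ →ₗ[R] ↥X₀) (f : ↥X₀ →ₗ[R] ↥C), X₀ ∈ 𝒳 ∧ X₁ ∈ 𝒳 ∧
    ∀ W ∈ 𝒳, Function.Surjective (fun h : ↥W →ₗ[R] ↥X₀ => f ∘ₗ h) ∧
      Function.Exact (fun h : ↥W →ₗ[R] ↥X₁ => g ∘ₗ h) (fun h : ↥W →ₗ[R] ↥X₀ => f ∘ₗ h)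

/-- `𝒳` is coherent: `𝒞(𝒳) = rap 𝒳`. -/
def Coherent (𝒳 : Set (ModuleCat.{u} R)) : Prop :=
  ∀ M : ModuleCat.{u} R, Module.Finite R M → (MemCC R 𝒳 M ↔ HasRightApprox R 𝒳 M)

/-- The right Ext-orthogonal class `𝒳^⊥` of a class `𝒳` of finitely generated modules. -/
def XPerp (𝒳 : Set (ModuleCat.{u} R)) : Set (ModuleCat.{u} R) :=
  {Y | Module.Finite R Y ∧ ∀ X ∈ 𝒳, ∀ i, 0 < i → ExtVanish R i X Y}

/-- The projective dimension of `M` is at most `n`. -/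
def ProjDimLE (M : ModuleCat.{u} R) (n : ℕ) : Prop :=
  ∀ N : ModuleCat.{u} R, ∀ i, n < i → ExtVanish R i M N

/-- The depth of an `R`-module over a local ring: `inf { i | Ext^i(k, M) ≠ 0 }`. -/
def moduleDepth [IsLocalRing R] (M : ModuleCat.{u} R) : ℕ∞ :=
  sInf ((fun i : ℕ => (i : ℕ∞)) ''
    {i : ℕ | ¬ ExtVanish R i (ModuleCat.of R (ResidueField R)) M})

/-- `M` is a maximal Cohen–Macaulay `R`-module: `depth M ≥ dim R`. -/
def IsMCM [IsLocalRing R] (M : ModuleCat.{u} R) : Prop :=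
  ringKrullDim R ≤ (moduleDepth R M : WithBot ℕ∞)

/-- A Gorenstein local ring: `∃ n, Ext^i(M, R) = 0` for every finitely generated `M`
and every `i > n`. -/
def IsGorensteinLocalRing : Prop :=
  ∃ n : ℕ, ∀ M : ModuleCat.{u} R, Module.Finite R M →
    ∀ i, n < i → ExtVanish R i M (ModuleCat.of R R)

/-- A regular local ring: Noetherian local with `dim R = dim_k 𝔪/𝔪²`. -/
def IsRegularLocal [IsLocalRing R] : Prop :=
  IsNoetherianRing R ∧
    ringKrullDim R = (Module.finrank (ResidueField R) (CotangentSpace R) : ℕ)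

/-- Witness that the local ring `R` is a complete intersection: its `𝔪`-adic completion
is `Q/(f₁, …, f_c)` for a regular local ring `Q` and a `Q`-regular sequence `f₁, …, f_c`. -/
structure CompleteIntersectionWitness [IsLocalRing R] : Type (u + 1) where
  Q : Type u
  [commRing : CommRing Q]
  [localRing : IsLocalRing Q]
  regular : IsRegularLocal Q
  fs : List Q
  regSeq : RingTheory.Sequence.IsRegular Q fs
  equiv : AdicCompletion (maximalIdeal R) R ≃+* Q ⧸ Ideal.span {x : Q | x ∈ fs}

/-- The local ring `R` is a complete intersection. -/
def IsCompleteIntersection [IsLocalRing R] : Prop :=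
  Nonempty (CompleteIntersectionWitness R)

end

/-!
Since `R` is henselian, a polynomial annihilating an endomorphism `φ` of a finitely generated
module splits as `a * b` with `a ≡ Xᵐ` modulo the maximal ideal and `b` of unit constant term, and
coprimality of `a` and `b` gives a Fitting decomposition: `φ` is bijective on one summand and
nilpotent modulo the maximal ideal on the other. Applied to `1 - θ` for the endomorphisms `θ` of
`X` over `M`, it shows that an approximation `f : X → M` with `X` as small as possible is right
minimal. Then `ker f` lies in `𝒳^⊥` (Wakamatsu's lemma): for `W ∈ 𝒳`, an extension of `W` by `X`
whose pushforward along `f` splits is itself split by minimality, so `Ext¹(W, X) → Ext¹(W, M)` is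
injective; since `Hom(W, X) → Hom(W, M)` is surjective, `Ext¹(W, ker f) = 0`, and dimension
shifting inside `𝒳` gives the higher vanishing. Composing an approximation of `ker f` with the
inclusion `ker f → X` yields a finite presentation of `Hom(-, M)|_𝒳`.
-/

section Hensel

open Polynomial

variable {R : Type u} [CommRing R] [HenselianLocalRing R]

theorem exists_hasMap_residue_eq (P : StandardEtalePair R) {a₀ : ResidueField R}
    (ha₀ : P.HasMap a₀) : ∃ a : R, P.HasMap a ∧ residue R a = a₀ := by
  obtain ⟨a, ha, rfl⟩ := ((HenselianLocalRing.TFAE R).out 0 1 rfl rfl).1 inferInstance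
    P.f P.monic_f a₀ ha₀.1 ha₀.isUnit_derivative_f.ne_zero
  have hg : IsUnit (residue R (aeval a P.g)) := by
    simpa only [← ResidueField.algebraMap_eq, aeval_algebraMap_apply] using ha₀.2
  exact ⟨a, ⟨by rwa [coe_aeval_eq_eval], (isUnit_map_iff (residue R) _).1 hg⟩, rfl⟩

theorem exists_ofId_comp_eq_of_isStandardEtale {S : Type*} [CommRing S] [Algebra R S]
    [Algebra.IsStandardEtale R S] (ψ : S →ₐ[R] ResidueField R) :
    ∃ σ : S →ₐ[R] R, (Algebra.ofId R (ResidueField R)).comp σ = ψ := by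
  obtain ⟨P⟩ := Algebra.IsStandardEtale.nonempty_standardEtalePresentation (R := R) (S := S)
  obtain ⟨a, ha, haψ⟩ := exists_hasMap_residue_eq P.P (P.hasMap.map ψ)
  refine ⟨(P.P.lift a ha).comp P.equivRing.toAlgHom, P.hom_ext ?_⟩
  simpa [Algebra.ofId_apply] using haψ

theorem exists_ofId_comp_eq_of_etale {S : Type*} [CommRing S] [Algebra R S]
    [Algebra.Etale R S] (ψ : S →ₐ[R] ResidueField R) :
    ∃ σ : S →ₐ[R] R, (Algebra.ofId R (ResidueField R)).comp σ = ψ := by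
  have : (RingHom.ker ψ).IsPrime := RingHom.ker_isPrime ψ
  obtain ⟨s, hs, _⟩ := Algebra.IsEtaleAt.exists_isStandardEtale (R := R) (RingHom.ker ψ)
  have hψs (y : Submonoid.powers s) : IsUnit (ψ y) := by
    obtain ⟨_, n, rfl⟩ := y
    simpa only [map_pow] using (isUnit_iff_ne_zero.2 hs).pow n
  obtain ⟨σ, hσ⟩ := exists_ofId_comp_eq_of_isStandardEtale
    (IsLocalization.liftAlgHom hψs : Localization.Away s →ₐ[R] ResidueField R)
  refine ⟨σ.comp (IsScalarTower.toAlgHom R S _), ?_⟩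
  rw [← AlgHom.comp_assoc, hσ]
  ext x
  simp

theorem exists_monic_isCoprime_mul_eq {p : R[X]} (hp : p.Monic) {f g : (ResidueField R)[X]}
    (hf : f.Monic) (hg : g.Monic) (hfg : IsCoprime f g) (hpfg : p.map (residue R) = f * g) :
    ∃ a b : R[X], a.Monic ∧ b.Monic ∧ IsCoprime a b ∧ p = a * b ∧
      a.map (residue R) = f ∧ b.map (residue R) = g := by
  have hdeg : p.natDegree = f.natDegree + g.natDegree := by
    rw [← hf.natDegree_mul hg, ← hpfg, hp.natDegree_map]
  let F (S : Type u) [CommRing S] [Algebra R S] :=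
    UniversalCoprimeFactorizationRing.homEquiv S _ _ hdeg (.mk p hp rfl)
  obtain ⟨σ, hσ⟩ := exists_ofId_comp_eq_of_etale
    ((F (ResidueField R)).symm ⟨(.mk f hf rfl, .mk g hg rfl), hpfg.symm, hfg⟩)
  have hfst := UniversalCoprimeFactorizationRing.homEquiv_comp_fst _ _ _ hdeg (.mk p hp rfl) σ
    (Algebra.ofId R (ResidueField R))
  have hsnd := UniversalCoprimeFactorizationRing.homEquiv_comp_snd _ _ _ hdeg (.mk p hp rfl) σ
    (Algebra.ofId R (ResidueField R))
  rw [hσ, Equiv.apply_symm_apply] at hfst hsnd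
  obtain ⟨hab, hcop⟩ := (F R σ).2
  refine ⟨(F R σ).1.1.1, (F R σ).1.2.1, (F R σ).1.1.monic, (F R σ).1.2.monic, hcop, ?_,
    congr(($hfst).1).symm, congr(($hsnd).1).symm⟩
  simpa using hab.symm

theorem exists_mul_eq_map_eq_X_pow {p : R[X]} (hp : p.Monic) :
    ∃ (a b : R[X]) (m : ℕ), IsCoprime a b ∧ p = a * b ∧
      a.map (residue R) = X ^ m ∧ IsUnit (b.coeff 0) := by
  have hp' := hp.map (residue R)
  obtain ⟨q, hpq, hq⟩ := exists_eq_pow_rootMultiplicity_mul_and_not_dvd _ hp'.ne_zero 0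
  rw [C_0, sub_zero] at hpq hq
  have hq_monic : q.Monic := (monic_X_pow _).of_mul_monic_left (hpq ▸ hp')
  have hcop : IsCoprime (X ^ (p.map (residue R)).rootMultiplicity 0) q :=
    (irreducible_X.coprime_iff_not_dvd.2 hq).pow_left
  obtain ⟨a, b, -, -, hab, hpab, ha, rfl⟩ :=
    exists_monic_isCoprime_mul_eq hp (monic_X_pow _) hq_monic hcop hpq
  refine ⟨a, b, _, hab, hpab, ha, ?_⟩
  rwa [X_dvd_iff, coeff_map, ← Ne, residue_ne_zero_iff_isUnit] at hq

end Hensel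

section Fitting

open Polynomial Submodule

variable {R : Type u} [CommRing R] {M : Type*} [AddCommGroup M] [Module R M]

theorem aeval_apply_mem_ker_aeval (φ : Module.End R M) (p q : R[X]) {x : M}
    (hx : x ∈ LinearMap.ker (aeval φ p)) : aeval φ q x ∈ LinearMap.ker (aeval φ p) := by
  rw [LinearMap.mem_ker, ← Module.End.mul_apply, ← map_mul, mul_comm, map_mul,
    Module.End.mul_apply, LinearMap.mem_ker.1 hx, map_zero]

theorem bijOn_ker_aeval_of_isUnit_coeff_zero (φ : Module.End R M) {p : R[X]}
    (hp : IsUnit (p.coeff 0)) :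
    Set.BijOn φ (LinearMap.ker (aeval φ p)) (LinearMap.ker (aeval φ p)) := by
  obtain ⟨u, hu⟩ := hp
  let ψ : Module.End R M := -((↑u⁻¹ : R) • aeval φ p.divX)
  have hψ {x : M} (hx : x ∈ LinearMap.ker (aeval φ p)) : ψ (φ x) = x ∧ φ (ψ x) = x := by
    have hl := congr(aeval φ $(divX_mul_X_add p) x)
    have hr := congr(aeval φ $(X_mul_divX_add p) x)
    simp only [map_add, map_mul, aeval_X, aeval_C, LinearMap.add_apply, Module.End.mul_apply,
      Module.algebraMap_end_apply, LinearMap.mem_ker.1 hx, ← hu, add_eq_zero_iff_eq_neg] at hl hr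
    simp [ψ, hl, hr, smul_smul]
  refine Set.InvOn.bijOn (f' := ψ) ⟨fun x hx => (hψ hx).1, fun x hx => (hψ hx).2⟩ ?_ ?_
  · intro x hx
    simpa using aeval_apply_mem_ker_aeval φ p X hx
  · intro x hx
    exact neg_mem (smul_mem _ _ (aeval_apply_mem_ker_aeval φ p p.divX hx))

theorem map_pow_ker_aeval_le_smul (φ : Module.End R M) {I : Ideal R} {p : R[X]} {m : ℕ}
    (hp : ∀ i, (X ^ m - p).coeff i ∈ I) :
    (LinearMap.ker (aeval φ p)).map (φ ^ m) ≤ I • LinearMap.ker (aeval φ p) := by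
  rintro _ ⟨x, hx, rfl⟩
  have h : (φ ^ m) x = aeval φ (X ^ m - p) x := by
    rw [map_sub, LinearMap.sub_apply, LinearMap.mem_ker.1 hx, sub_zero, map_pow, aeval_X]
  rw [h, aeval_eq_sum_range (p := X ^ m - p), LinearMap.sum_apply]
  refine sum_mem fun i _ => smul_mem_smul (hp i) ?_
  simpa using aeval_apply_mem_ker_aeval φ p (X ^ i) hx

theorem bijective_one_sub_of_range_pow_le [Module.Finite R M] {I : Ideal R}
    (hI : I ≤ Ideal.jacobson ⊥) (φ : Module.End R M) {m : ℕ}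
    (hφ : LinearMap.range (φ ^ m) ≤ I • ⊤) : Function.Bijective (1 - φ : Module.End R M) := by
  suffices h : (⊤ : Submodule R M) ≤ LinearMap.range (1 - φ) from
    OrzechProperty.bijective_of_surjective_endomorphism _
      (LinearMap.range_eq_top.1 (top_le_iff.1 h))
  refine le_of_le_smul_of_le_jacobson_bot Module.Finite.fg_top hI fun x _ => ?_
  have hx : (1 - φ) ((∑ i ∈ Finset.range m, φ ^ i) x) + (φ ^ m) x = x := by
    rw [← Module.End.mul_apply, mul_neg_geom_sum, LinearMap.sub_apply, Module.End.one_apply,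
      sub_add_cancel]
  rw [← hx]
  exact add_mem_sup (LinearMap.mem_range_self _ _) (hφ (LinearMap.mem_range_self _ _))

theorem exists_isCompl_bijOn_and_map_pow_le [HenselianLocalRing R] [Module.Finite R M]
    (φ : Module.End R M) :
    ∃ (N C : Submodule R M) (m : ℕ), IsCompl N C ∧ Set.BijOn φ N N ∧
      C.map (φ ^ m) ≤ maximalIdeal R • C := by
  obtain ⟨p, hp, hpφ⟩ := LinearMap.exists_monic_and_aeval_eq_zero R φ
  obtain ⟨a, b, m, hcop, rfl, ha, hb⟩ := exists_mul_eq_map_eq_X_pow hp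
  have hcompl : IsCompl (LinearMap.ker (aeval φ a)) (LinearMap.ker (aeval φ b)) := by
    refine ⟨disjoint_ker_aeval_of_isCoprime φ hcop, codisjoint_iff.2 ?_⟩
    rw [sup_ker_aeval_eq_ker_aeval_mul_of_coprime φ hcop, hpφ, LinearMap.ker_zero]
  refine ⟨_, _, m, hcompl.symm, bijOn_ker_aeval_of_isUnit_coeff_zero φ hb,
    map_pow_ker_aeval_le_smul φ fun i => ?_⟩
  rw [← residue_eq_zero_iff, ← coeff_map, Polynomial.map_sub, ha]
  simp

/-- A homomorphism `f : X → M` is right minimal if every endomorphism of `X` over `M` is an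
automorphism; this is the minimality of approximations in the sense of Auslander and Smalø. -/
def IsRightMinimal {X : Type*} [AddCommGroup X] [Module R X] (f : X →ₗ[R] M) : Prop :=
  ∀ θ : Module.End R X, f ∘ₗ θ = f → Function.Bijective θ

theorem isRightMinimal_of_forall_isCompl [HenselianLocalRing R]
    {X : Type*} [AddCommGroup X] [Module R X] [Module.Finite R X] {f : X →ₗ[R] M}
    (hf : ∀ N C : Submodule R X, IsCompl N C → N ≤ LinearMap.ker f → N = ⊥) :
    IsRightMinimal f := by
  intro θ hθ
  obtain ⟨N, C, m, hNC, hN, hC⟩ := exists_isCompl_bijOn_and_map_pow_le (1 - θ)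
  have hNf : N ≤ LinearMap.ker f := by
    intro x hx
    obtain ⟨y, -, rfl⟩ := hN.surjOn hx
    rw [LinearMap.mem_ker, LinearMap.sub_apply, map_sub, Module.End.one_apply,
      ← LinearMap.comp_apply, hθ, sub_self]
  have hN_bot : N = ⊥ := hf N C hNC hNf
  have hC_top : C = ⊤ := by simpa [hN_bot] using hNC.sup_eq_top
  rw [hC_top, Submodule.map_top] at hC
  rw [← sub_sub_cancel 1 θ]
  exact bijective_one_sub_of_range_pow_le (jacobson_eq_maximalIdeal ⊥ bot_ne_top).ge _ hC

theorem finrank_residueField_tensorProduct_lt_of_isCompl [IsLocalRing R] [Module.Finite R M]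
    {N C : Submodule R M} (hNC : IsCompl N C) (hN : N ≠ ⊥) :
    Module.finrank (ResidueField R) (TensorProduct R (ResidueField R) C) <
      Module.finrank (ResidueField R) (TensorProduct R (ResidueField R) M) := by
  have : Module.Finite R N := .of_surjective _ (projectionOnto_surjective hNC)
  have : Module.Finite R C := .of_surjective _ (projectionOnto_surjective hNC.symm)
  let e := (TensorProduct.AlgebraTensorModule.congr (.refl (ResidueField R) (ResidueField R))
    (prodEquivOfIsCompl N C hNC).symm).trans
    (TensorProduct.prodRight R (ResidueField R) (ResidueField R) N C)
  have : Nontrivial (TensorProduct R (ResidueField R) N) := by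
    rw [← not_subsingleton_iff_nontrivial, IsLocalRing.subsingleton_tensorProduct,
      not_subsingleton_iff_nontrivial]
    exact nontrivial_iff_ne_bot.2 hN
  rw [e.finrank_eq, Module.finrank_prod]
  exact Nat.lt_add_of_pos_left Module.finrank_pos

end Fitting

section Approximation

open Submodule

variable {R : Type u} [CommRing R] {𝒳 : Set (ModuleCat.{u} R)} {X M : ModuleCat.{u} R}

theorem IsRightApprox.comp_subtype_of_isCompl (h𝒳 : IsResolving R 𝒳) {f : X →ₗ[R] M}
    (hf : IsRightApprox R 𝒳 f) {N C : Submodule R X} (hNC : IsCompl N C)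
    (hN : N ≤ LinearMap.ker f) :
    IsRightApprox R 𝒳 (X := ModuleCat.of R C) (f ∘ₗ C.subtype) := by
  refine ⟨?_, fun W hW g => ?_⟩
  · exact h𝒳.summandClosed (.of R C) (.of R N)
      (h𝒳.isoClosed hf.1 (prodEquivOfIsCompl C N hNC.symm).symm)
  · obtain ⟨h, rfl⟩ := hf.2 W hW g
    refine ⟨C.projectionOnto N hNC.symm ∘ₗ h, LinearMap.ext fun w => ?_⟩
    have hw : h w - C.projection N hNC.symm (h w) ∈ LinearMap.ker f :=
      hN (sub_projection_mem hNC.symm (h w))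
    rw [LinearMap.mem_ker, map_sub, sub_eq_zero] at hw
    exact hw.symm

theorem HasRightApprox.exists_isRightMinimal [HenselianLocalRing R] (h𝒳 : IsResolving R 𝒳)
    (hM : HasRightApprox R 𝒳 M) :
    ∃ (X : ModuleCat.{u} R) (f : X →ₗ[R] M), IsRightApprox R 𝒳 f ∧ IsRightMinimal f := by
  obtain ⟨X, f, hf⟩ := hM
  induction hn : Module.finrank (ResidueField R) (TensorProduct R (ResidueField R) X)
    using Nat.strong_induction_on generalizing X with
  | _ n ih =>
    subst hn
    by_cases hmin : IsRightMinimal f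
    · exact ⟨X, f, hf, hmin⟩
    have := h𝒳.finite X hf.1
    obtain ⟨N, C, hNC, hNf, hN⟩ :
        ∃ N C : Submodule R X, IsCompl N C ∧ N ≤ LinearMap.ker f ∧ N ≠ ⊥ := by
      contrapose! hmin
      exact isRightMinimal_of_forall_isCompl hmin
    exact ih _ (finrank_residueField_tensorProduct_lt_of_isCompl hNC hN) (.of R C)
      (f ∘ₗ C.subtype) (hf.comp_subtype_of_isCompl h𝒳 hNC hNf) rfl

theorem IsRightApprox.surjective (h𝒳 : IsResolving R 𝒳) {f : X →ₗ[R] M}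
    (hf : IsRightApprox R 𝒳 f) : Function.Surjective f := by
  intro x
  obtain ⟨h, hh⟩ := hf.2 (.of R R) (h𝒳.freeMem _ (inferInstanceAs (Module.Finite R R))
    (inferInstanceAs (Module.Free R R))) (LinearMap.toSpanSingleton R M x)
  exact ⟨h (1 : R), by simpa using congr($hh (1 : R))⟩

theorem MemCC.hasRightApprox (hM : MemCC R 𝒳 M) : HasRightApprox R 𝒳 M := by
  obtain ⟨X₀, _, _, f, hX₀, _, hf⟩ := hM
  exact ⟨X₀, f, hX₀, fun W hW => (hf W hW).1⟩

theorem IsRightApprox.memCC {f : X →ₗ[R] M} (hf : IsRightApprox R 𝒳 f)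
    (hK : HasRightApprox R 𝒳 (.of R (LinearMap.ker f))) : MemCC R 𝒳 M := by
  obtain ⟨X₁, g, hX₁, hg⟩ := hK
  refine ⟨X, X₁, (LinearMap.ker f).subtype ∘ₗ g, f, hf.1, hX₁, fun W hW =>
    ⟨hf.2 W hW, fun a => ⟨fun ha => ?_, ?_⟩⟩⟩
  · obtain ⟨b, hb⟩ := hg W hW (a.codRestrict (LinearMap.ker f) (LinearMap.congr_fun ha))
    exact ⟨b, LinearMap.ext fun w => congrArg Subtype.val (LinearMap.congr_fun hb w)⟩
  · rintro ⟨b, rfl⟩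
    exact LinearMap.ext fun w => (g (b w)).2

end Approximation

section Wakamatsu

open Limits Abelian

section Realization

universe w

variable {C : Type*} [Category C] [Abelian C]

theorem exists_shortExact_pushout {S : ShortComplex C} (hS : S.ShortExact) {A : C}
    (a : S.X₁ ⟶ A) : ∃ (T : C) (i : A ⟶ T) (p : T ⟶ S.X₃) (w : i ≫ p = 0) (b : S.X₂ ⟶ T),
      (ShortComplex.mk i p w).ShortExact ∧ S.f ≫ b = a ≫ i ∧ b ≫ p = S.g := by
  have := hS.mono_f
  have := hS.epi_g
  let p : pushout S.f a ⟶ S.X₃ := pushout.desc S.g 0 (by simp)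
  have hp : pushout.inl S.f a ≫ p = S.g := pushout.inl_desc _ _ _
  have w : pushout.inr S.f a ≫ p = 0 := pushout.inr_desc _ _ _
  have : Epi p := epi_of_epi_fac hp
  refine ⟨_, pushout.inr S.f a, p, w, pushout.inl S.f a, ⟨?_⟩, pushout.condition, hp⟩
  refine ShortComplex.exact_of_g_is_cokernel _ (CokernelCofork.IsColimit.ofπ' p w fun k hk =>
    have hk' : S.f ≫ pushout.inl S.f a ≫ k = 0 := by rw [pushout.condition_assoc, hk, comp_zero]
    ⟨hS.exact.desc _ hk', ?_⟩)
  apply pushout.hom_ext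
  · rw [reassoc_of% hp, hS.exact.g_desc]
  · rw [reassoc_of% w, zero_comp, hk]

theorem exists_shortExact_extClass_eq [HasExt.{w} C] [EnoughProjectives C] {W A : C}
    (x : Ext W A 1) : ∃ (T : C) (i : A ⟶ T) (p : T ⟶ W) (w : i ≫ p = 0)
      (h : (ShortComplex.mk i p w).ShortExact), h.extClass = x := by
  have hP : (ShortComplex.mk (kernel.ι (Projective.π W)) _ (kernel.condition _)).ShortExact :=
    { exact := ShortComplex.exact_kernel _ }
  obtain ⟨a, rfl⟩ := Ext.contravariant_sequence_exact₃ hP A x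
    (Ext.eq_zero_of_projective _) (add_zero 1)
  obtain ⟨a, rfl⟩ := Ext.homEquiv₀.symm.surjective a
  obtain ⟨T, i, p, w, b, h, hab, hb⟩ := exists_shortExact_pushout hP a
  refine ⟨T, i, p, w, h, ?_⟩
  let φ : ShortComplex.mk (kernel.ι (Projective.π W)) _ (kernel.condition _) ⟶
      ShortComplex.mk i p w := { τ₁ := a, τ₂ := b, τ₃ := 𝟙 W, comm₁₂ := hab.symm }
  exact (Ext.mk₀_id_comp _).symm.trans (hP.extClass_naturality h φ).symm

end Realization

variable {R : Type u} [CommRing R] {𝒳 : Set (ModuleCat.{u} R)} {X M : ModuleCat.{u} R}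

theorem IsRightApprox.ext_eq_zero_of_comp_eq_zero (h𝒳 : IsResolving R 𝒳) {f : X →ₗ[R] M}
    (hf : IsRightApprox R 𝒳 f) (hmin : IsRightMinimal f) {W : ModuleCat.{u} R} (hW : W ∈ 𝒳)
    {x : Ext W X 1} (hx : x.comp (Ext.mk₀ (ModuleCat.ofHom f)) (add_zero 1) = 0) : x = 0 := by
  obtain ⟨T, i, p, w, hT, rfl⟩ := exists_shortExact_extClass_eq x
  obtain ⟨γ, hγ⟩ := Ext.contravariant_sequence_exact₁ hT M _ (add_zero 1) hx
  obtain ⟨γ, rfl⟩ := Ext.homEquiv₀.symm.surjective γ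
  have hiγ : i ≫ γ = ModuleCat.ofHom f :=
    Ext.homEquiv₀.symm.injective ((Ext.mk₀_comp_mk₀ i γ).symm.trans hγ)
  have hT𝒳 : T ∈ 𝒳 := h𝒳.extClosed X T W i.hom p.hom ⟨hT.moduleCat_injective_f,
    (ShortComplex.ShortExact.moduleCat_exact_iff_function_exact _).1 hT.exact,
    hT.moduleCat_surjective_g⟩ hf.1 hW
  obtain ⟨h, hh⟩ := hf.2 T hT𝒳 γ.hom
  have hθ : Function.Bijective (h ∘ₗ i.hom) := hmin _ <| by
    rw [← LinearMap.comp_assoc, hh]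
    exact congrArg ModuleCat.Hom.hom hiγ
  let r : T ⟶ X := ModuleCat.ofHom ((LinearEquiv.ofBijective _ hθ).symm.toLinearMap ∘ₗ h)
  have hir : i ≫ r = 𝟙 X := by
    ext x
    exact (LinearEquiv.ofBijective _ hθ).symm_apply_apply x
  calc hT.extClass = hT.extClass.comp ((Ext.mk₀ i).comp (Ext.mk₀ r) (add_zero 0)) (add_zero 1) := by
        rw [Ext.mk₀_comp_mk₀, hir, Ext.comp_mk₀_id]
    _ = 0 := hT.extClass_comp_assoc _

theorem IsRightApprox.subsingleton_ext_one_ker (h𝒳 : IsResolving R 𝒳) {f : X →ₗ[R] M}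
    (hf : IsRightApprox R 𝒳 f) (hmin : IsRightMinimal f) {W : ModuleCat.{u} R} (hW : W ∈ 𝒳) :
    Subsingleton (Ext W (ModuleCat.of R (LinearMap.ker f)) 1) := by
  have hS := LinearMap.shortExact_shortComplexKer (hf.surjective h𝒳)
  refine subsingleton_of_forall_eq 0 fun x => ?_
  have hx : (x.comp (Ext.mk₀ f.shortComplexKer.f) (add_zero 1)).comp
      (Ext.mk₀ f.shortComplexKer.g) (add_zero 1) = 0 := by
    rw [Ext.comp_assoc_of_third_deg_zero, Ext.mk₀_comp_mk₀, f.shortComplexKer.zero, Ext.mk₀_zero,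
      Ext.comp_zero]
  obtain ⟨y, rfl⟩ := Ext.covariant_sequence_exact₁ W hS x
    (hf.ext_eq_zero_of_comp_eq_zero h𝒳 hmin hW hx) (zero_add 1)
  obtain ⟨y, rfl⟩ := Ext.homEquiv₀.symm.surjective y
  obtain ⟨h, hh⟩ := hf.2 W hW y.hom
  have hy : y = ModuleCat.ofHom h ≫ f.shortComplexKer.g := ModuleCat.hom_ext hh.symm
  change (Ext.mk₀ y).comp hS.extClass (zero_add 1) = 0
  rw [hy, ← Ext.mk₀_comp_mk₀_assoc, hS.comp_extClass, Ext.comp_zero]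

theorem IsResolving.subsingleton_ext_succ (h𝒳 : IsResolving R 𝒳) {Y : ModuleCat.{u} R}
    (hY : ∀ W ∈ 𝒳, Subsingleton (Ext W Y 1)) (n : ℕ) {W : ModuleCat.{u} R} (hW : W ∈ 𝒳) :
    Subsingleton (Ext W Y (n + 1)) := by
  induction n generalizing W with
  | zero => exact hY W hW
  | succ n ih =>
    have := h𝒳.finite W hW
    obtain ⟨F, _, _, _, _, p, hp⟩ := Module.exists_finite_presentation R W
    have hK : ModuleCat.of R (LinearMap.ker p) ∈ 𝒳 :=
      h𝒳.kerClosed _ (.of R F) W (LinearMap.ker p).subtype p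
        ⟨(LinearMap.ker p).injective_subtype, p.exact_subtype_ker_map, hp⟩
        (h𝒳.freeMem _ ‹_› ‹_›) hW
    have : Subsingleton (Ext p.shortComplexKer.X₁ Y (n + 1)) := ih hK
    exact (precomp_extClass_surjective_of_projective_X₂ Y
      (LinearMap.shortExact_shortComplexKer hp) (n + 1)).subsingleton

theorem extVanish_succ_of_subsingleton_ext {W Y : ModuleCat.{u} R} {n : ℕ}
    (h : Subsingleton (Ext W Y (n + 1))) : ExtVanish R (n + 1) W Y := by
  let P := projectiveResolution W
  suffices hP : IsZero ((P.complex.linearYonedaObj R Y).homology (n + 1)) from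
    ModuleCat.subsingleton_of_isZero (hP.of_iso (P.isoExt (n + 1) Y))
  rw [← HomologicalComplex.exactAt_iff_isZero_homology,
    HomologicalComplex.exactAt_iff' _ n (n + 1) (n + 2) (by simp) (by simp),
    ShortComplex.moduleCat_exact_iff]
  intro x hx
  exact (P.extMk_eq_zero_iff x (n + 2) rfl hx n rfl).1 (Subsingleton.elim _ _)

theorem IsRightApprox.ker_mem_xPerp [IsNoetherianRing R] (h𝒳 : IsResolving R 𝒳) {f : X →ₗ[R] M}
    (hf : IsRightApprox R 𝒳 f) (hmin : IsRightMinimal f) :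
    ModuleCat.of R (LinearMap.ker f) ∈ XPerp R 𝒳 := by
  have := h𝒳.finite X hf.1
  refine ⟨inferInstanceAs (Module.Finite R (LinearMap.ker f)), fun W hW i hi => ?_⟩
  obtain ⟨n, rfl⟩ := Nat.exists_eq_add_of_lt hi
  rw [zero_add]
  exact extVanish_succ_of_subsingleton_ext
    (h𝒳.subsingleton_ext_succ (fun _ => hf.subsingleton_ext_one_ker h𝒳 hmin) n hW)

end Wakamatsu

theorem stmt14_general (R : Type u) [CommRing R] [IsNoetherianRing R] [HenselianLocalRing R]
    (𝒳 : Set (ModuleCat.{u} R)) (h𝒳 : IsResolving R 𝒳)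
    (h : ∀ Y ∈ XPerp R 𝒳, HasRightApprox R 𝒳 Y) :
    Coherent R 𝒳 := by
  refine fun M _ => ⟨MemCC.hasRightApprox, fun hM => ?_⟩
  obtain ⟨X, f, hf, hmin⟩ := hM.exists_isRightMinimal h𝒳
  exact hf.memCC (h _ (hf.ker_mem_xPerp h𝒳 hmin))

/-- Over a henselian Gorenstein local ring, if every module in `𝒳^⊥`
admits a right `𝒳`-approximation, then `𝒳` is coherent. -/
theorem stmt14 (R : Type u) [CommRing R] [IsNoetherianRing R] [IsLocalRing R]
    [HenselianLocalRing R] (hG : IsGorensteinLocalRing R)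
    (𝒳 : Set (ModuleCat.{u} R)) (h𝒳 : IsResolving R 𝒳)
    (h : ∀ Y ∈ XPerp R 𝒳, HasRightApprox R 𝒳 Y) :
    Coherent R 𝒳 :=
  stmt14_general R 𝒳 h𝒳 h
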